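/- The unitary group of D+K is path-connected in the norm topology. -/

import Mathlib

/-!
Let `U = D₀ + K` be unitary, with `D₀` diagonal with entries `d n` and `K` compact. The basis is
weakly null, so `‖K (e n)‖ → 0` and hence `|d n| → 1`; replacing `d n` by its phase changes `D₀` by
a compact operator, and `U = D V` with `D` a diagonal unitary and `V` a unitary compact
perturbation of `1`. By the Fredholm alternative the spectrum of `V` away from `1` consists of
eigenvalues; their eigenvectors are orthogonal and `H` is separable, so the spectrum is countable
and misses a point of the circle (`exists_not_mem_spectrum`). Moving a scalar of modulus one from
`V` to `D` gives `U = D W` with `W - c` compact, `c ≠ -1`, and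
`1 + W` invertible (`exists_factorization`).

In place of `W = e^{iX}` and the path `e^{itX}`, the proof uses the Möbius path
`(s + W)(1 + sW)⁻¹`, `0 ≤ s ≤ 1`, which runs from `W` to `1`. It consists of unitaries, because
`(s + W)* (s + W) = (1 + sW)* (1 + sW)`, and of compact perturbations of scalars
(`joinedIn_mul_diagonal`). The remaining diagonal unitary is joined to `1` by contracting the
arguments of its entries (`joinedIn_diagonal_one`).
-/

open scoped InnerProductSpace
open ContinuousLinearMap

variable {H : Type*} [NormedAddCommGroup H] [InnerProductSpace ℂ H] [CompleteSpace H]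

/-- An operator is diagonal with respect to the fixed orthonormal (Hilbert) basis `e`. -/
def IsDiagonal (e : HilbertBasis ℕ ℂ H) (T : H →L[ℂ] H) : Prop :=
  ∀ n m : ℕ, n ≠ m → ⟪e m, T (e n)⟫_ℂ = 0

/-- The set `D + K` of sums of a diagonal operator and a compact operator. -/
def DplusK (e : HilbertBasis ℕ ℂ H) : Set (H →L[ℂ] H) :=
  {T | ∃ D K : H →L[ℂ] H, IsDiagonal e D ∧ IsCompactOperator ⇑K ∧ T = D + K}

set_option linter.unusedSectionVars false

/-! ### Diagonal operators -/

lemma IsDiagonal.apply_basis {e : HilbertBasis ℕ ℂ H} {T : H →L[ℂ] H} (hT : IsDiagonal e T)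
    (n : ℕ) : T (e n) = ⟪e n, T (e n)⟫_ℂ • e n := by
  apply e.repr.injective
  ext m
  rw [e.repr_apply_apply, e.repr_apply_apply, inner_smul_right,
    orthonormal_iff_ite.mp e.orthonormal]
  by_cases h : n = m
  · subst h; simp
  · simp [hT n m h, Ne.symm h]

lemma IsDiagonal.of_apply_basis {e : HilbertBasis ℕ ℂ H} {T : H →L[ℂ] H} {d : ℕ → ℂ}
    (h : ∀ n, T (e n) = d n • e n) : IsDiagonal e T := by
  intro n m hnm
  rw [h, inner_smul_right, e.orthonormal.2 (Ne.symm hnm), mul_zero]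

lemma IsDiagonal.inner_apply {e : HilbertBasis ℕ ℂ H} {T : H →L[ℂ] H} (hT : IsDiagonal e T)
    (n : ℕ) (x : H) : ⟪e n, T x⟫_ℂ = ⟪e n, T (e n)⟫_ℂ * ⟪e n, x⟫_ℂ := by
  have h := (e.hasSum_repr x).mapL ((innerSL ℂ (e n)).comp T)
  simp only [map_smul, ContinuousLinearMap.comp_apply, innerSL_apply_apply, e.repr_apply_apply,
    smul_eq_mul] at h
  refine h.unique ?_
  rw [mul_comm]
  refine hasSum_single n fun m hm => ?_
  rw [hT m n hm, mul_zero]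

lemma IsDiagonal.sub {e : HilbertBasis ℕ ℂ H} {S T : H →L[ℂ] H} (hS : IsDiagonal e S)
    (hT : IsDiagonal e T) : IsDiagonal e (S - T) := by
  intro n m h
  simp [hS n m h, hT n m h]

lemma hasSum_norm_inner_sq (e : HilbertBasis ℕ ℂ H) (x : H) :
    HasSum (fun n => ‖⟪e n, x⟫_ℂ‖ ^ 2) (‖x‖ ^ 2) := by
  have h := Complex.hasSum_re (e.hasSum_inner_mul_inner x x)
  convert! h using 1
  · ext n
    rw [← inner_conj_symm x (e n), ← Complex.normSq_eq_conj_mul_self, Complex.ofReal_re,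
      Complex.normSq_eq_norm_sq]
  · exact norm_sq_eq_re_inner (𝕜 := ℂ) x

/-- A diagonal operator is bounded in norm by any bound on its diagonal entries (Parseval). -/
lemma IsDiagonal.norm_le {e : HilbertBasis ℕ ℂ H} {T : H →L[ℂ] H} (hT : IsDiagonal e T)
    {C : ℝ} (hC : 0 ≤ C) (h : ∀ n, ‖T (e n)‖ ≤ C) : ‖T‖ ≤ C := by
  refine T.opNorm_le_bound hC fun x => ?_
  refine le_of_sq_le_sq ?_ (by positivity)
  rw [mul_pow]
  refine hasSum_le (fun n => ?_) (hasSum_norm_inner_sq e (T x))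
    ((hasSum_norm_inner_sq e x).mul_left (C ^ 2))
  rw [hT.inner_apply, norm_mul, mul_pow]
  gcongr
  refine (norm_inner_le_norm _ _).trans ?_
  rw [e.orthonormal.1 n, one_mul]
  exact h n

/-- Unimodular diagonal entries define a unitary: it carries the basis `e n` to the orthonormal
basis `d n • e n`. -/
lemma exists_unitary_diagonal (e : HilbertBasis ℕ ℂ H) (d : ℕ → ℂ) (hd : ∀ n, ‖d n‖ = 1) :
    ∃ T ∈ unitary (H →L[ℂ] H), ∀ n, T (e n) = d n • e n := by
  have hd0 : ∀ n, d n ≠ 0 := fun n h => by simpa [h] using hd n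
  have ho : Orthonormal ℂ fun n => d n • e n := by
    refine ⟨fun n => by simp [norm_smul, hd, e.orthonormal.1 n], fun n m h => ?_⟩
    simp [inner_smul_left, inner_smul_right, e.orthonormal.2 h]
  have hspan : (Submodule.span ℂ (Set.range fun n => d n • e n))ᗮ = ⊥ := by
    rw [Submodule.eq_bot_iff]
    intro x hx
    apply e.repr.injective
    ext n
    rw [e.repr_apply_apply]
    have := (Submodule.mem_orthogonal _ _).mp hx (d n • e n) (Submodule.subset_span ⟨n, rfl⟩)
    simpa [inner_smul_left, hd0] using this
  let e' := HilbertBasis.mkOfOrthogonalEqBot ho hspan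
  refine ⟨_, (Unitary.linearIsometryEquiv.symm (e.repr.trans e'.repr.symm)).2, fun n => ?_⟩
  simp [e', e.repr_self, HilbertBasis.repr_symm_single]

/-- A diagonal operator whose entries tend to zero is a norm limit of its finite truncations. -/
lemma IsDiagonal.isCompactOperator {e : HilbertBasis ℕ ℂ H} {T : H →L[ℂ] H}
    (hT : IsDiagonal e T) (h : Filter.Tendsto (fun n => ‖T (e n)‖) Filter.atTop (nhds 0)) :
    IsCompactOperator T := by
  let F : ℕ → H →L[ℂ] H := fun N =>
    ∑ n ∈ Finset.range N, (innerSL ℂ (e n)).smulRight (T (e n))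
  have hFe : ∀ N n, F N (e n) = if n < N then T (e n) else 0 := by
    intro N n
    simp [F, orthonormal_iff_ite.mp e.orthonormal]
  have hF : ∀ N, IsCompactOperator (F N) := by
    intro N
    have : F N ∈ compactOperator (RingHom.id ℂ) H H := by
      refine Submodule.sum_mem _ fun n _ => ?_
      have h1 : IsCompactOperator (ContinuousLinearMap.toSpanSingleton ℂ (T (e n))) :=
        isCompactOperator_of_locallyCompactSpace_rng (ContinuousLinearMap.toSpanSingleton ℂ (T (e n)))
      have h2 := h1.comp_clm (innerSL ℂ (e n))
      exact h2
    exact this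
  refine isCompactOperator_of_tendsto (F := F) (l := Filter.atTop) ?_ 
    (Filter.Eventually.of_forall hF)
  rw [Metric.tendsto_atTop]
  intro ε hε
  obtain ⟨N, hN⟩ := Metric.tendsto_atTop.mp h (ε / 2) (by positivity)
  refine ⟨N, fun M hM => ?_⟩
  rw [dist_eq_norm]
  refine lt_of_le_of_lt (IsDiagonal.norm_le (e := e) ?_ (C := ε / 2) (by positivity) ?_)
    (by linarith)
  · refine IsDiagonal.of_apply_basis
      (d := fun n => if n < M then 0 else - ⟪e n, T (e n)⟫_ℂ) fun n => ?_
    rw [sub_apply, hFe]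
    split_ifs
    · simp
    · rw [zero_sub, neg_smul, ← hT.apply_basis]
  · intro n
    rw [sub_apply, hFe]
    split_ifs with hn
    · simp; positivity
    · have := hN n (by omega)
      rw [Real.dist_0_eq_abs, abs_norm] at this
      simpa using this.le

/-- Compact operators send the weakly null sequence `e n` to a norm-null sequence. -/
lemma IsCompactOperator.tendsto_norm_basis (e : HilbertBasis ℕ ℂ H) {K : H →L[ℂ] H}
    (hK : IsCompactOperator K) :
    Filter.Tendsto (fun n => ‖K (e n)‖) Filter.atTop (nhds 0) := by
  rw [← tendsto_zero_iff_norm_tendsto_zero]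
  obtain ⟨C, hC, hKC⟩ := hK.image_closedBall_subset_compact (f := (K : H →ₗ[ℂ] H)) 1
  refine hC.tendsto_nhds_of_unique_mapClusterPt
    (Filter.Eventually.of_forall fun n => hKC ⟨e n, by simp [e.orthonormal.1 n], rfl⟩) ?_
  intro y _ hy
  refine ext_inner_left ℂ fun z => ?_
  rw [inner_zero_right]
  have h1 : MapClusterPt ⟪z, y⟫_ℂ Filter.atTop fun n => ⟪z, K (e n)⟫_ℂ :=
    hy.continuousAt_comp (f := fun w => ⟪z, w⟫_ℂ) (by fun_prop)
  have h2 : Filter.Tendsto (fun n => ⟪z, K (e n)⟫_ℂ) Filter.atTop (nhds 0) := by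
    have h3 := (hasSum_norm_inner_sq e (adjoint K z)).summable.tendsto_atTop_zero
    rw [tendsto_zero_iff_norm_tendsto_zero]
    have h4 := h3.sqrt
    simp only [Real.sqrt_sq (norm_nonneg _), Real.sqrt_zero] at h4
    refine h4.congr fun n => ?_
    rw [adjoint_inner_right, norm_inner_symm]
  exact eq_of_nhds_neBot (h1.neBot.mono (inf_le_inf_left _ h2))

/-! ### The spectrum of a unitary compact perturbation of the identity -/

/-- Outside `1` the spectrum of such a unitary consists of eigenvalues, with mutually orthogonal
eigenvectors; by Bessel's inequality each basis vector is non-orthogonal to only countably many of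
them, so there are only countably many eigenvalues and some point of the circle is missed. -/
lemma exists_not_mem_spectrum (e : HilbertBasis ℕ ℂ H) {V : H →L[ℂ] H}
    (hV : V ∈ unitary (H →L[ℂ] H)) (hK : IsCompactOperator (V - 1 : H →L[ℂ] H)) :
    ∃ z : ℂ, ‖z‖ = 1 ∧ z ≠ 1 ∧ z ∉ spectrum ℂ V := by
  let E : Set ℂ := {a | ∃ x : H, ‖x‖ = 1 ∧ V x = a • x}
  have hE1 : ∀ a ∈ E, ‖a‖ = 1 := by
    rintro a ⟨x, hx, hVx⟩
    have := V.norm_map_of_mem_unitary hV x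
    rwa [hVx, norm_smul, hx, mul_one] at this
  have hE : E.Countable := by
    choose x hx hVx using fun a : E => a.2
    have ho : Orthonormal ℂ x := by
      refine ⟨hx, fun a b hab => ?_⟩
      have h := V.inner_map_map_of_mem_unitary hV (x a) (x b)
      rw [hVx, hVx, inner_smul_left, inner_smul_right] at h
      by_contra h0
      have h1 : (starRingEnd ℂ) (a : ℂ) * b = 1 :=
        mul_right_cancel₀ h0 (by rw [one_mul, mul_assoc]; exact h)
      have h2 : (a : ℂ) * (starRingEnd ℂ) (a : ℂ) = 1 := by
        rw [Complex.mul_conj, Complex.normSq_eq_norm_sq, hE1 a a.2]; simp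
      apply hab
      ext
      calc (a : ℂ) = a * ((starRingEnd ℂ) (a : ℂ) * b) := by rw [h1, mul_one]
        _ = b := by rw [← mul_assoc, h2, one_mul]
    have hc : (⋃ n, {a : E | ⟪x a, e n⟫_ℂ ≠ 0}).Countable := by
      refine Set.countable_iUnion fun n => ?_
      refine (ho.inner_products_summable (e n)).countable_support.mono fun a ha => ?_
      simpa using ha
    rw [← Set.countable_coe_iff, ← Set.countable_univ_iff]
    refine hc.mono fun a _ => ?_
    by_contra h
    simp only [Set.mem_iUnion, Set.mem_ofPred_eq, not_exists, not_not] at h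
    have : x a = 0 := by
      apply e.repr.injective
      ext n
      rw [e.repr_apply_apply, ← inner_conj_symm, h n]
      simp
    simpa [this] using hx a
  let f : ℝ → ℂ := fun t => Complex.exp (t * Complex.I)
  have hf : Set.InjOn f (Set.Ioo 0 1) := by
    intro s hs t ht hst
    have hπ := Real.pi_gt_three
    have := Complex.exp_inj_of_neg_pi_lt_of_le_pi (x := s * Complex.I) (y := t * Complex.I)
      (by simp; linarith [hs.1]) (by simp; linarith [hs.2]) (by simp; linarith [ht.1])
      (by simp; linarith [ht.2]) hst
    simpa using this
  have hcount : (Set.Ioo (0 : ℝ) 1 ∩ f ⁻¹' E).Countable :=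
    Set.MapsTo.countable_of_injOn (t := E) (fun t ht => ht.2)
      (hf.mono Set.inter_subset_left) hE
  obtain ⟨t, ht, htE⟩ : ∃ t ∈ Set.Ioo (0 : ℝ) 1, f t ∉ E := by
    by_contra! h
    have hsub : Set.Ioo (0 : ℝ) 1 ⊆ f ⁻¹' E := h
    rw [Set.inter_eq_left.mpr hsub] at hcount
    exact (Cardinal.Real.Ioo_countable_iff.mp hcount).not_gt one_pos
  have hft : f t ≠ 1 := by
    intro h
    have hπ := Real.pi_gt_three
    have := Complex.exp_inj_of_neg_pi_lt_of_le_pi (x := t * Complex.I) (y := 0)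
      (by simp; linarith [ht.1]) (by simp; linarith [ht.2]) (by simp; linarith)
      (by simp; linarith) (by simpa using h)
    simp at this
    exact ht.1.ne' this
  refine ⟨f t, Complex.norm_exp_ofReal_mul_I t, hft, fun hs => ?_⟩
  rcases hK.hasEigenvalue_or_mem_resolventSet (sub_ne_zero.mpr hft) with h | h
  · obtain ⟨x, hx⟩ := h.exists_hasEigenvector
    have hx0 : x ≠ 0 := hx.2
    have hVx : V x = f t • x := by
      have := hx.apply_eq_smul
      simp only [ContinuousLinearMap.coe_coe, sub_apply, sub_smul, one_smul] at this
      exact sub_left_injective this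
    refine htE ⟨(‖x‖⁻¹ : ℂ) • x, ?_, ?_⟩
    · rw [norm_smul]; simp [hx0]
    · rw [map_smul, hVx, smul_comm]
  · apply hs
    rw [spectrum.mem_resolventSet_iff] at h ⊢
    simpa using h

/-- Every unitary in `D+K` is a diagonal unitary times a unitary compact perturbation of a scalar
`c ≠ -1`, whose spectrum moreover misses `-1`. -/
lemma exists_factorization (e : HilbertBasis ℕ ℂ H) {U : H →L[ℂ] H}
    (hU : U ∈ unitary (H →L[ℂ] H)) (hUD : U ∈ DplusK e) :
    ∃ (D W : H →L[ℂ] H) (c : ℂ), D ∈ unitary (H →L[ℂ] H) ∧ IsDiagonal e D ∧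
      W ∈ unitary (H →L[ℂ] H) ∧ U = D * W ∧ ‖c‖ = 1 ∧ c ≠ -1 ∧
      IsCompactOperator (W - c • (1 : H →L[ℂ] H)) ∧ IsUnit (1 + W) := by
  obtain ⟨D₀, K, hD₀, hK, hUeq⟩ := hUD
  let d : ℕ → ℂ := fun n => ⟪e n, D₀ (e n)⟫_ℂ
  let σ : ℕ → ℂ := fun n => Complex.exp (Complex.arg (d n) * Complex.I)
  obtain ⟨D, hD, hDe⟩ := exists_unitary_diagonal e σ fun n => Complex.norm_exp_ofReal_mul_I _
  have hDdiag : IsDiagonal e D := .of_apply_basis hDe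
  have hdiff : IsCompactOperator (D₀ - D) := by
    refine (hD₀.sub hDdiag).isCompactOperator ?_
    refine squeeze_zero (fun _ => norm_nonneg _) (fun n => ?_) (hK.tendsto_norm_basis e)
    have h1 : ‖(D₀ - D) (e n)‖ = |‖d n‖ - 1| := by
      have : d n - σ n = ((‖d n‖ - 1 : ℝ) : ℂ) * σ n := by
        have := Complex.norm_mul_exp_arg_mul_I (d n)
        simp only [σ]
        push_cast
        rw [sub_mul, this, one_mul]
      rw [sub_apply, hD₀.apply_basis, hDe, ← sub_smul, norm_smul,
        e.orthonormal.1 n, mul_one]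
      change ‖d n - σ n‖ = _
      rw [this, norm_mul, Complex.norm_real, Complex.norm_exp_ofReal_mul_I, mul_one,
        Real.norm_eq_abs]
    have h2 : ‖D₀ (e n)‖ = ‖d n‖ := by
      rw [hD₀.apply_basis, norm_smul, e.orthonormal.1 n, mul_one]
    have h3 : ‖U (e n)‖ = 1 := by
      rw [U.norm_map_of_mem_unitary hU, e.orthonormal.1 n]
    rw [h1, ← h2, ← h3]
    refine (abs_norm_sub_norm_le _ _).trans_eq ?_
    rw [hUeq, add_apply, norm_sub_rev, add_sub_cancel_left]
  let V := star D * U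
  have hV : V ∈ unitary (H →L[ℂ] H) := mul_mem (Unitary.star_mem hD) hU
  have hVK : IsCompactOperator (V - 1 : H →L[ℂ] H) := by
    have h : V - 1 = star D * ((D₀ - D) + K) := by
      simp only [V, hUeq, ← (Unitary.mem_iff.mp hD).1]
      noncomm_ring
    rw [h]
    exact (hdiff.add hK).clm_comp (star D)
  obtain ⟨z, hz, hz1, hzV⟩ := exists_not_mem_spectrum e hV hVK
  have hz0 : z ≠ 0 := fun h => by simp [h] at hz
  have hscal : ∀ {w : ℂ}, ‖w‖ = 1 → ∀ {T : H →L[ℂ] H}, T ∈ unitary (H →L[ℂ] H) →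
      w • T ∈ unitary (H →L[ℂ] H) := by
    intro w hw T hT
    have : (starRingEnd ℂ) w * w = 1 := by
      rw [← Complex.normSq_eq_conj_mul_self, Complex.normSq_eq_norm_sq, hw]; simp
    rw [Unitary.mem_iff] at hT ⊢
    simp only [star_smul, smul_mul_smul_comm, hT.1, hT.2, RCLike.star_def, this, mul_comm w,
      one_smul, and_self]
  -- Rotating by `-z⁻¹` moves the gap `z` of the spectrum of `V` to `-1`.
  refine ⟨(-z) • D, (-z⁻¹) • V, -z⁻¹, hscal (by simpa) hD, ?_, hscal (by simp [hz]) hV, ?_,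
    by simp [hz], by simpa using hz1, ?_, ?_⟩
  · intro n m h
    simp [inner_smul_right, hDdiag n m h]
  · rw [smul_mul_smul_comm, neg_mul_neg, mul_inv_cancel₀ hz0, one_smul]
    simp [V, ← mul_assoc, (Unitary.mem_iff.mp hD).2]
  · rw [← smul_sub]
    exact hVK.smul (-z⁻¹)
  · rw [spectrum.mem_iff, not_not] at hzV
    have h : 1 + (-z⁻¹) • V = z⁻¹ • (algebraMap ℂ (H →L[ℂ] H) z - V) := by
      rw [Algebra.algebraMap_eq_smul_one, smul_sub, smul_smul, inv_mul_cancel₀ hz0, one_smul,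
        neg_smul, sub_eq_add_neg]
    rw [h]
    exact hzV.smul (Units.mk0 z⁻¹ (inv_ne_zero hz0))

/-! ### The two paths -/

/-- The path is `D (s + W)(1 + sW)⁻¹` for `0 ≤ s ≤ 1`; each of its points is `D` times a unitary
compact perturbation of a scalar. -/
lemma joinedIn_mul_diagonal (e : HilbertBasis ℕ ℂ H) {D W : H →L[ℂ] H} {c : ℂ}
    (hD : D ∈ unitary (H →L[ℂ] H)) (hDe : IsDiagonal e D) (hW : W ∈ unitary (H →L[ℂ] H))
    (hc : ‖c‖ = 1) (hc1 : c ≠ -1) (hK : IsCompactOperator (W - c • (1 : H →L[ℂ] H)))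
    (hu : IsUnit (1 + W)) :
    JoinedIn {U : H →L[ℂ] H | U ∈ DplusK e ∧ U ∈ unitary (H →L[ℂ] H)} (D * W) D := by
  have hunit : ∀ s ∈ Set.Icc (0 : ℝ) 1, IsUnit (1 + (s : ℂ) • W) := by
    intro s hs
    rcases hs.2.eq_or_lt with rfl | h
    · simpa using hu
    · have hWn : ‖W‖ ≤ 1 := W.opNorm_le_bound zero_le_one fun x => by
        rw [W.norm_map_of_mem_unitary hW, one_mul]
      have : ‖-((s : ℂ) • W)‖ < 1 := by
        rw [norm_neg, norm_smul, Complex.norm_real, Real.norm_of_nonneg hs.1]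
        nlinarith [hs.1, norm_nonneg W]
      simpa using isUnit_one_sub_of_norm_lt_one this
  refine JoinedIn.ofLine (f := fun s : ℝ =>
    D * (((s : ℂ) • 1 + W) * Ring.inverse (1 + (s : ℂ) • W))) ?_ ?_ ?_ ?_
  · have hinv : ContinuousOn (fun s : ℝ => Ring.inverse (1 + (s : ℂ) • W)) (Set.Icc 0 1) := by
      intro s hs
      have h1 : ContinuousAt (Ring.inverse : (H →L[ℂ] H) → _) (1 + (s : ℂ) • W) :=
        NormedRing.inverse_continuousAt (hunit s hs).unit
      exact (h1.comp (f := fun s : ℝ => 1 + (s : ℂ) • W)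
        (by fun_prop)).continuousWithinAt
    have hnum : Continuous fun s : ℝ => (s : ℂ) • (1 : H →L[ℂ] H) + W := by fun_prop
    exact continuousOn_const.mul (hnum.continuousOn.mul hinv)
  · simp
  · simp only [Complex.ofReal_one, one_smul]
    rw [Ring.mul_inverse_cancel _ hu, mul_one]
  · rintro _ ⟨s, hs, rfl⟩
    have hA := hunit s hs
    set A := 1 + (s : ℂ) • W with hAdef
    set B := (s : ℂ) • 1 + W with hBdef
    set R := Ring.inverse A with hR
    have hAR : A * R = 1 := Ring.mul_inverse_cancel _ hA
    have hWW := Unitary.mem_iff.mp hW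
    constructor
    · have hsc : 1 + (s : ℂ) * c ≠ 0 := by
        intro h
        have h1 : (s : ℂ) * c = -1 := by linear_combination h
        have h2 : s = 1 := by
          have := congrArg norm h1
          simpa [hc, abs_of_nonneg hs.1] using this
        exact hc1 (by simpa [h2] using h1)
      -- `a` is the value at `c` of the Möbius map whose functional calculus gives the path.
      let a : ℂ := (s + c) / (1 + s * c)
      have ha : (s : ℂ) + c = a * (1 + s * c) := by
        simp only [a]; rw [div_mul_cancel₀ _ hsc]
      have h : B * R = a • 1 + ((1 - a * s) • (W - c • (1 : H →L[ℂ] H))) * R := by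
        have h1 : B - a • A = (1 - a * s) • (W - c • (1 : H →L[ℂ] H)) := by
          have h2 : c - a * s * c = a - s := by linear_combination ha
          rw [smul_sub, smul_smul, show (1 - a * s) * c = a - s by linear_combination ha,
            hAdef, hBdef]
          module
        rw [← h1, sub_mul, smul_mul_assoc, hAR]
        abel
      refine ⟨a • D, D * (((1 - a * s) • (W - c • (1 : H →L[ℂ] H))) * R), ?_, ?_, ?_⟩
      · intro n m hnm
        simp [hDe n m hnm]
      · exact ((hK.smul (1 - a * s)).comp_clm R).clm_comp D
      · change D * (B * R) = _
        rw [h, mul_add, mul_smul_comm, mul_one]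
    · refine mul_mem hD ?_
      have hsA : star A = 1 + (s : ℂ) • star W := by simp [hAdef]
      have hsB : star B = (s : ℂ) • 1 + star W := by simp [hBdef]
      have hBA : B = star A * W := by
        rw [hsA, add_mul, one_mul, smul_mul_assoc, hWW.1, add_comm, hBdef]
      have hBB : star B * B = star A * A := by
        rw [hsA, hsB, hBdef, hAdef]
        simp only [add_mul, mul_add, smul_mul_assoc, mul_smul_comm, hWW.1, one_mul, mul_one]
        module
      refine IsUnit.mem_unitary_of_star_mul_self ?_ ?_
      · change IsUnit (B * R)
        rw [hBA]
        exact (hA.star.mul ⟨Unitary.toUnits ⟨W, hW⟩, rfl⟩).mul hA.ringInverse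
      · change star (B * R) * (B * R) = 1
        calc star (B * R) * (B * R) = star R * (star B * B) * R := by
              rw [star_mul]; simp only [mul_assoc]
          _ = star (A * R) * (A * R) := by rw [hBB, star_mul]; simp only [mul_assoc]
          _ = 1 := by rw [hAR]; simp

/-- Contracting the arguments of the diagonal entries connects a diagonal unitary to `1`. -/
lemma joinedIn_diagonal_one (e : HilbertBasis ℕ ℂ H) {D : H →L[ℂ] H}
    (hD : D ∈ unitary (H →L[ℂ] H)) (hDe : IsDiagonal e D) :
    JoinedIn {U : H →L[ℂ] H | U ∈ DplusK e ∧ U ∈ unitary (H →L[ℂ] H)} 1 D := by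
  let θ : ℕ → ℝ := fun n => Complex.arg ⟪e n, D (e n)⟫_ℂ
  have hθ : ∀ n, |θ n| ≤ Real.pi := fun n => Complex.abs_arg_le_pi _
  choose T hT hTe using fun t : ℝ => exists_unitary_diagonal e
    (fun n => Complex.exp ((t * θ n : ℝ) * Complex.I)) fun n => Complex.norm_exp_ofReal_mul_I _
  have hTdiag : ∀ t, IsDiagonal e (T t) := fun t => .of_apply_basis (hTe t)
  have hext : ∀ {S S' : H →L[ℂ] H}, IsDiagonal e S → IsDiagonal e S' →
      (∀ n, S (e n) = S' (e n)) → S = S' := by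
    intro S S' hS hS' h
    rw [← sub_eq_zero, ← norm_le_zero_iff]
    exact (hS.sub hS').norm_le le_rfl fun n => by simp [h n]
  have hone : IsDiagonal e (1 : H →L[ℂ] H) := .of_apply_basis (d := 1) fun n => by simp
  have hlip : LipschitzWith (Real.toNNReal Real.pi) T := by
    refine LipschitzWith.of_dist_le_mul fun t s => ?_
    rw [dist_eq_norm, Real.coe_toNNReal _ Real.pi_pos.le]
    refine ((hTdiag t).sub (hTdiag s)).norm_le (by positivity) fun n => ?_
    rw [sub_apply, hTe, hTe, ← sub_smul, norm_smul, e.orthonormal.1 n,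
      mul_one]
    have h : Complex.exp ((t * θ n : ℝ) * Complex.I) - Complex.exp ((s * θ n : ℝ) * Complex.I)
        = Complex.exp ((s * θ n : ℝ) * Complex.I) *
          (Complex.exp (Complex.I * ((t - s) * θ n : ℝ)) - 1) := by
      rw [mul_sub, ← Complex.exp_add, mul_one]
      congr 2
      push_cast; ring
    rw [h, norm_mul, Complex.norm_exp_ofReal_mul_I, one_mul]
    refine Real.norm_exp_I_mul_ofReal_sub_one_le.trans ?_
    rw [norm_mul, mul_comm, Real.dist_eq]
    exact mul_le_mul_of_nonneg_right (hθ n) (abs_nonneg _)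
  refine JoinedIn.ofLine (f := T) hlip.continuous.continuousOn ?_ ?_ ?_
  · exact hext (hTdiag 0) hone fun n => by simp [hTe]
  · refine hext (hTdiag 1) hDe fun n => ?_
    have h1 : ‖⟪e n, D (e n)⟫_ℂ‖ = 1 := by
      have := D.norm_map_of_mem_unitary hD (e n)
      rwa [hDe.apply_basis, norm_smul, e.orthonormal.1 n, mul_one] at this
    have h2 := Complex.norm_mul_exp_arg_mul_I ⟪e n, D (e n)⟫_ℂ
    rw [h1, Complex.ofReal_one, one_mul] at h2
    rw [hTe, one_mul, h2, ← hDe.apply_basis]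
  · rintro _ ⟨t, _, rfl⟩
    exact ⟨⟨T t, 0, hTdiag t, isCompactOperator_zero, by simp⟩, hT t⟩

/-- The unitary group of `D+K` is path-connected in the norm topology. -/
theorem unitary_group_pathConnected (e : HilbertBasis ℕ ℂ H) :
    IsPathConnected {U : H →L[ℂ] H | U ∈ DplusK e ∧ U ∈ unitary (H →L[ℂ] H)} := by
  refine ⟨1, ⟨⟨1, 0, ?_, isCompactOperator_zero, by simp⟩, one_mem _⟩, ?_⟩
  · exact .of_apply_basis (d := 1) fun n => by simp
  · rintro U ⟨hUD, hU⟩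
    obtain ⟨D, W, c, hD, hDe, hW, rfl, hc, hc1, hK, hu⟩ := exists_factorization e hU hUD
    exact (joinedIn_diagonal_one e hD hDe).trans
      (joinedIn_mul_diagonal e hD hDe hW hc hc1 hK hu).symm
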